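/- For all x ≥ 1, √(2π(x+1/6))·(x/e)^x ≤ Γ(1+x) ≤ √(2π(x + e²/(2π) − 1))·(x/e)^x. -/

import Mathlib

open Real

open Filter Topology

theorem le_log_add_one_sub_log {x : ℝ} (hx : 0 < x) :
    2 / (2 * x + 1) + 2 / (3 * (2 * x + 1) ^ 3) ≤ log (x + 1) - log x := by
  have hs := hasSum_log_one_add_inv hx
  have hl : log (1 + x⁻¹) = log (x + 1) - log x := by
    rw [← log_div (by positivity) hx.ne']
    congr 1
    field_simp
  rw [hl] at hs
  have := sum_le_hasSum (Finset.range 2) (fun k _ => by positivity) hs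
  refine le_trans (le_of_eq ?_) this
  simp only [Finset.sum_range_succ, Finset.sum_range_zero]
  norm_num
  field_simp

theorem log_add_one_sub_log_le {x : ℝ} (hx : 0 < x) :
    log (x + 1) - log x ≤ 2 / (2 * x + 1) + 2 / (3 * (2 * x + 1) ^ 3)
      + 1 / (10 * x * (x + 1) * (2 * x + 1) ^ 3) := by
  have hs := hasSum_log_one_add_inv hx
  have hl : log (1 + x⁻¹) = log (x + 1) - log x := by
    rw [← log_div (by positivity) hx.ne']
    congr 1
    field_simp
  rw [hl, ← hasSum_nat_add_iff' 2] at hs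
  have hv : (1 / (2 * x + 1)) ^ 2 < 1 := by
    rw [div_pow, div_lt_one (by positivity)]
    nlinarith
  have hg := (hasSum_geometric_of_lt_one (by positivity) hv).mul_left
    (2 / 5 * (1 / (2 * x + 1)) ^ 5)
  have := hasSum_le (fun k => ?_) hs hg
  · simp only [Finset.sum_range_succ, Finset.sum_range_zero] at this
    have h1 : (1 - (1 / (2 * x + 1)) ^ 2)⁻¹ = (2 * x + 1) ^ 2 / (4 * x * (x + 1)) := by
      rw [inv_eq_iff_eq_inv, inv_div]
      field_simp
      ring
    rw [h1, sub_le_iff_le_add] at this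
    refine this.trans (le_of_eq ?_)
    norm_num
    field_simp
    ring
  · have h2 : 2 * (1 / (2 * ((k + 2 : ℕ) : ℝ) + 1)) ≤ 2 / 5 := by
      rw [mul_one_div]
      gcongr
      push_cast
      linarith [k.cast_nonneg (α := ℝ)]
    calc _ ≤ 2 / 5 * (1 / (2 * x + 1)) ^ (2 * (k + 2) + 1) := by
          gcongr
      _ = _ := by rw [← pow_mul, mul_assoc, ← pow_add]; congr 2; ring

/-- The logarithm of `Γ(1 + x) / (√(2π) (x / e) ^ x)`. -/
noncomputable def logGammaExcess (x : ℝ) : ℝ :=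
  log (Gamma (1 + x)) - x * log x + x - log (2 * π) / 2

theorem logGammaExcess_sub_add_one {x : ℝ} (hx : 0 < x) :
    logGammaExcess x - logGammaExcess (x + 1) = x * (log (x + 1) - log x) - 1 := by
  unfold logGammaExcess
  rw [show 1 + (x + 1) = (1 + x) + 1 by ring, Gamma_add_one (by positivity),
    log_mul (by positivity) (Gamma_pos_of_pos (by positivity)).ne', add_comm 1 x]
  ring

/-- **Stirling's formula** along the sequence `x + n`. -/
theorem tendsto_logGammaExcess_add_nat {x : ℝ} (hx : 0 < x) :
    Tendsto (fun n : ℕ => logGammaExcess (x + n) - log (x + n) / 2) atTop (𝓝 0) := by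
  have hΓ := (BohrMollerup.tendsto_log_gamma hx).const_sub (log (Gamma x))
  have hS := (Stirling.tendsto_stirlingSeq_sqrt_pi.log (by positivity)).sub_const (log √π)
  have hdiv : Tendsto (fun n : ℕ => 1 + x / n) atTop (𝓝 (1 + 0)) :=
    (tendsto_const_div_atTop_nhds_zero_nat x).const_add 1
  have hlog := (hdiv.log (by norm_num)).const_mul (x + 1 / 2)
  have hmul := (tendsto_mul_log_one_add_div_atTop x).comp tendsto_natCast_atTop_atTop
  have hlim := (hΓ.add hS).add ((hmul.add hlog).const_sub x)
  simp only [sub_self, add_zero, log_one, mul_zero] at hlim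
  refine hlim.congr' ?_
  filter_upwards [eventually_ge_atTop 1] with n hn
  have hn' : (0 : ℝ) < n := by exact_mod_cast hn
  have hadd := BohrMollerup.f_add_nat_eq (f := log ∘ Gamma) (fun {y} hy => by
    simp only [Function.comp_apply]
    rw [Gamma_add_one hy.ne', log_mul hy.ne' (Gamma_pos_of_pos hy).ne', add_comm]) hx (n + 1)
  have hdl : log (1 + x / n) = log (x + n) - log n := by
    rw [← log_div (by positivity) hn'.ne']
    congr 1
    field_simp
    ring
  simp only [Function.comp_apply, Nat.cast_add, Nat.cast_one] at hadd ⊢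
  rw [hdl, Stirling.log_stirlingSeq_formula, BohrMollerup.logGammaSeq, logGammaExcess,
    show 1 + (x + (n : ℝ)) = x + (n + 1) by ring, hadd, log_mul two_ne_zero hn'.ne',
    log_mul two_ne_zero pi_ne_zero, log_div hn'.ne' (exp_ne_zero 1), log_exp, log_sqrt pi_pos.le]
  ring

theorem tendsto_logGammaExcess_sub_of_tendsto {x : ℝ} (hx : 0 < x) {g : ℝ → ℝ}
    (hg : Tendsto (fun t => g t - log t / 2) atTop (𝓝 0)) :
    Tendsto (fun n : ℕ => logGammaExcess (x + n) - g (x + n)) atTop (𝓝 0) := by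
  have hn : Tendsto (fun n : ℕ => x + (n : ℝ)) atTop atTop :=
    tendsto_atTop_add_const_left _ _ tendsto_natCast_atTop_atTop
  simpa using (tendsto_logGammaExcess_add_nat hx).sub (hg.comp hn)

theorem nonneg_of_succ_le_of_tendsto {u : ℕ → ℝ} (hu : ∀ n, u (n + 1) ≤ u n)
    (hlim : Tendsto u atTop (𝓝 0)) (n : ℕ) : 0 ≤ u n :=
  (antitone_nat_of_succ_le hu).le_of_tendsto hlim n

theorem half_log_add_sixth_le_logGammaExcess {x : ℝ} (hx : 1 ≤ x) :
    log (x + 1 / 6) / 2 ≤ logGammaExcess x := by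
  have hlim := tendsto_logGammaExcess_sub_of_tendsto (x := x) (by linarith)
    (g := fun t => log (t + 1 / 6) / 2) (by
      have := (tendsto_log_comp_add_sub_log (1 / 6)).div_const 2
      simpa [sub_div] using this)
  have key := nonneg_of_succ_le_of_tendsto (fun n => ?_) hlim 0
  · simpa using key
  · have hn := n.cast_nonneg (α := ℝ)
    set t := x + (n : ℝ) with ht
    have ht1 : 1 ≤ t := by linarith
    have ht0 : 0 < t := by linarith
    rw [Nat.cast_add, Nat.cast_one, ← add_assoc, ← ht]
    have h1 := logGammaExcess_sub_add_one ht0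
    have h2 := mul_le_mul_of_nonneg_left (le_log_add_one_sub_log ht0) ht0.le
    have h3 := le_log_add_one_sub_log (x := t + 1 / 6) (by linarith)
    rw [show t + 1 / 6 + 1 = t + 1 + 1 / 6 by ring] at h3
    have h4 : 0 ≤ t * (2 / (2 * t + 1) + 2 / (3 * (2 * t + 1) ^ 3)) - 1
        + (2 / (2 * (t + 1 / 6) + 1) + 2 / (3 * (2 * (t + 1 / 6) + 1) ^ 3)) / 2 := by
      obtain ⟨s, hs⟩ := exists_add_of_le ht1
      have hs0 : 0 ≤ s := by linarith
      rw [hs]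
      field_simp
      ring_nf
      positivity
    linarith

theorem logGammaExcess_le_half_log_add {x : ℝ} (hx : 0 < x) :
    logGammaExcess x ≤ log x / 2 + 1 / (12 * x) := by
  have hlim := (tendsto_logGammaExcess_sub_of_tendsto hx
    (g := fun t => log t / 2 + 1 / (12 * t)) (by
      have := (tendsto_inv_atTop_zero (𝕜 := ℝ)).const_mul (1 / 12)
      simpa [mul_comm] using this)).neg
  rw [neg_zero] at hlim
  have key := nonneg_of_succ_le_of_tendsto (fun n => ?_) hlim 0
  · simpa using key
  · have hn := n.cast_nonneg (α := ℝ)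
    set t := x + (n : ℝ) with ht
    have ht0 : 0 < t := by linarith
    rw [Nat.cast_add, Nat.cast_one, ← add_assoc, ← ht]
    have h1 := logGammaExcess_sub_add_one ht0
    have h2 := mul_le_mul_of_nonneg_left (log_add_one_sub_log_le ht0)
      (by linarith : 0 ≤ t + 1 / 2)
    have h4 : 0 ≤ 1 / (12 * t) - 1 / (12 * (t + 1)) + 1 - (t + 1 / 2) *
        (2 / (2 * t + 1) + 2 / (3 * (2 * t + 1) ^ 3)
          + 1 / (10 * t * (t + 1) * (2 * t + 1) ^ 3)) := by
      field_simp
      ring_nf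
      positivity
    linarith

/-- The Stirling series of `logGammaExcess` truncated after the `x⁻³` term. -/
noncomputable def stirlingApprox (x : ℝ) : ℝ :=
  log x / 2 + 1 / (12 * x) - 1 / (360 * x ^ 3)

theorem hasDerivAt_stirlingApprox {x : ℝ} (hx : 0 < x) :
    HasDerivAt stirlingApprox (1 / (2 * x) - 1 / (12 * x ^ 2) + 1 / (120 * x ^ 4)) x := by
  have h1 := (hasDerivAt_log hx.ne').div_const 2
  have h2 := (((hasDerivAt_id x).const_mul 12).fun_inv (by simpa using hx.ne'))
  have h3 := (((hasDerivAt_pow 3 x).const_mul 360).fun_inv (by positivity))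
  refine ((h1.add h2).sub h3 |>.congr_deriv ?_).congr_of_eventuallyEq (.of_forall fun t => ?_)
  · simp only [id]
    field_simp
    ring
  · simp [stirlingApprox]

theorem tendsto_stirlingApprox_sub :
    Tendsto (fun t => stirlingApprox t - log t / 2) atTop (𝓝 0) := by
  have h1 := (tendsto_inv_atTop_zero (𝕜 := ℝ))
  have := (h1.const_mul (1 / 12)).sub ((h1.pow 3).const_mul (1 / 360))
  simp only [mul_zero, ne_eq, OfNat.ofNat_ne_zero, not_false_eq_true, zero_pow, sub_zero] at this
  refine this.congr fun t => ?_
  simp only [stirlingApprox]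
  ring

theorem monotoneOn_stirlingApprox_sub_step :
    MonotoneOn (fun t => stirlingApprox t - stirlingApprox (t + 1)
      - t * (log (t + 1) - log t)) (Set.Ioi 0) := by
  have hd : ∀ t : ℝ, 0 < t → HasDerivAt (fun t => stirlingApprox t - stirlingApprox (t + 1)
      - t * (log (t + 1) - log t))
      ((1 / (2 * t) - 1 / (12 * t ^ 2) + 1 / (120 * t ^ 4))
        - (1 / (2 * (t + 1)) - 1 / (12 * (t + 1) ^ 2) + 1 / (120 * (t + 1) ^ 4))
        - (log (t + 1) - log t - 1 / (t + 1))) t := fun t ht => by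
    have h1 := hasDerivAt_stirlingApprox ht
    have h2 := (hasDerivAt_stirlingApprox (x := t + 1) (by linarith)).comp_add_const t 1
    have h3 := (hasDerivAt_log (x := t + 1) (by positivity)).comp_add_const t 1
    have h4 := (hasDerivAt_id t).mul (h3.sub (hasDerivAt_log ht.ne'))
    refine ((h1.sub h2).sub h4).congr_deriv ?_
    simp only [id, Pi.sub_apply]
    field_simp
    ring
  refine monotoneOn_of_deriv_nonneg (convex_Ioi 0)
    (fun t ht => (hd t ht).continuousAt.continuousWithinAt)
    (fun t ht => (hd t (interior_subset ht)).differentiableAt.differentiableWithinAt)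
    fun t ht => ?_
  have ht0 : 0 < t := interior_subset ht
  rw [(hd t ht0).deriv]
  have h1 := log_add_one_sub_log_le ht0
  have h2 : 0 ≤ (1 / (2 * t) - 1 / (12 * t ^ 2) + 1 / (120 * t ^ 4))
        - (1 / (2 * (t + 1)) - 1 / (12 * (t + 1) ^ 2) + 1 / (120 * (t + 1) ^ 4))
        - (2 / (2 * t + 1) + 2 / (3 * (2 * t + 1) ^ 3)
          + 1 / (10 * t * (t + 1) * (2 * t + 1) ^ 3) - 1 / (t + 1)) := by
    field_simp
    ring_nf
    positivity
  linarith

/-- Both sides vanish along `x + n` as `n → ∞`, so monotonicity follows by telescoping that of the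
unit-step differences. -/
theorem monotoneOn_stirlingApprox_sub_logGammaExcess :
    MonotoneOn (fun t => stirlingApprox t - logGammaExcess t) (Set.Ioi 0) := by
  intro x hx y hy hxy
  simp only [Set.mem_Ioi] at hx hy
  have hlim := (tendsto_logGammaExcess_sub_of_tendsto hx tendsto_stirlingApprox_sub).sub
    (tendsto_logGammaExcess_sub_of_tendsto hy tendsto_stirlingApprox_sub)
  rw [sub_zero] at hlim
  have key := nonneg_of_succ_le_of_tendsto (fun n => ?_) hlim 0
  · simp only [Nat.cast_zero, add_zero] at key ⊢
    linarith
  · have hn := n.cast_nonneg (α := ℝ)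
    have hxn : 0 < x + n := by linarith
    have hyn : 0 < y + n := by linarith
    have hstep := monotoneOn_stirlingApprox_sub_step hxn hyn (by linarith)
    have h1 := logGammaExcess_sub_add_one hxn
    have h2 := logGammaExcess_sub_add_one hyn
    simp only [Nat.cast_add, Nat.cast_one, ← add_assoc] at hstep ⊢
    linarith

theorem monotoneOn_half_log_add_sub_stirlingApprox {a : ℝ} (ha : 0 ≤ a) (ha' : a ≤ 0.1761) :
    MonotoneOn (fun t => log (t + a) / 2 - stirlingApprox t) (Set.Icc 1 2) := by
  have hd : ∀ t : ℝ, 0 < t → HasDerivAt (fun t => log (t + a) / 2 - stirlingApprox t)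
      ((t + a)⁻¹ / 2 - (1 / (2 * t) - 1 / (12 * t ^ 2) + 1 / (120 * t ^ 4))) t := fun t ht =>
    (((hasDerivAt_log (x := t + a) (by positivity)).comp_add_const t a).div_const 2).sub
      (hasDerivAt_stirlingApprox ht)
  refine monotoneOn_of_deriv_nonneg (convex_Icc 1 2)
    (fun t ht => (hd t (by linarith [ht.1])).continuousAt.continuousWithinAt)
    (fun t ht => (hd t
      (by linarith [(interior_subset ht).1])).differentiableAt.differentiableWithinAt)
    fun t ht => ?_
  obtain ⟨h1, h2⟩ := interior_subset ht
  have ht0 : 0 < t := by linarith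
  rw [(hd t ht0).deriv]
  have h3 : (t + a)⁻¹ / 2 - (1 / (2 * t) - 1 / (12 * t ^ 2) + 1 / (120 * t ^ 4))
      = (10 * t ^ 3 - t - a * (60 * t ^ 3 - 10 * t ^ 2 + 1)) / (120 * t ^ 4 * (t + a)) := by
    field_simp
    ring
  rw [h3]
  have h4 : a * (60 * t ^ 3 - 10 * t ^ 2 + 1) ≤ 0.1761 * (60 * t ^ 3 - 10 * t ^ 2 + 1) := by
    gcongr
    nlinarith [sq_nonneg t]
  refine div_nonneg ?_ (by positivity)
  nlinarith [mul_nonneg (sub_nonneg.2 h1) (sub_nonneg.2 h2),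
    mul_nonneg (mul_nonneg (sub_nonneg.2 h1) (sub_nonneg.2 h2)) ht0.le]

theorem exp_one_sq_div_two_pi_sub_one_mem_Icc :
    exp 1 ^ 2 / (2 * π) - 1 ∈ Set.Icc 0.176 0.1761 := by
  have h1 := exp_one_gt_d9
  have h2 := exp_one_lt_d9
  have h3 := pi_gt_d6
  have h4 := pi_lt_d6
  constructor
  · rw [le_sub_iff_add_le, le_div_iff₀ (by positivity)]
    nlinarith
  · rw [sub_le_iff_le_add, div_le_iff₀ (by positivity)]
    nlinarith

theorem logGammaExcess_le_half_log {x : ℝ} (hx : 1 ≤ x) :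
    logGammaExcess x ≤ log (x + (exp 1 ^ 2 / (2 * π) - 1)) / 2 := by
  obtain ⟨h1, h2⟩ := exp_one_sq_div_two_pi_sub_one_mem_Icc
  set a := exp 1 ^ 2 / (2 * π) - 1 with ha
  have hx0 : 0 < x := by linarith
  rcases le_total x 2 with hx2 | hx2
  · have hm := monotoneOn_stirlingApprox_sub_logGammaExcess (Set.mem_Ioi.2 one_pos)
      (Set.mem_Ioi.2 hx0) hx
    have hm' := monotoneOn_half_log_add_sub_stirlingApprox (by linarith) h2
      (Set.left_mem_Icc.2 one_le_two) ⟨hx, hx2⟩ hx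
    have h0 : logGammaExcess 1 = log (1 + a) / 2 := by
      rw [ha, add_sub_cancel, log_div (by positivity) (by positivity), log_pow, log_exp,
        logGammaExcess, one_add_one_eq_two, Gamma_two, log_one]
      push_cast
      ring
    simp only at hm hm'
    linarith
  · refine (logGammaExcess_le_half_log_add hx0).trans ?_
    have h3 := le_log_one_add_of_nonneg (x := a / x) (by positivity)
    have h4 : log (x + a) = log x + log (1 + a / x) := by
      rw [← log_mul (by positivity) (by positivity)]
      congr 1
      field_simp
    have h5 : 1 / (6 * x) ≤ 2 * (a / x) / (a / x + 2) := by
      field_simp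
      nlinarith
    have h6 : 1 / (12 * x) = 1 / (6 * x) / 2 := by field_simp; norm_num
    linarith

theorem log_sqrt_mul_rpow {x b : ℝ} (hx : 0 < x) (hb : 0 < b) :
    log (√(2 * π * b) * (x / exp 1) ^ x) = log (2 * π) / 2 + log b / 2 + x * log x - x := by
  rw [log_mul (by positivity) (by positivity), log_sqrt (by positivity),
    log_mul (by positivity) hb.ne', log_rpow (by positivity), log_div hx.ne' (exp_ne_zero 1),
    log_exp]
  ring

theorem batir_second_inequality (x : ℝ) (hx : 1 ≤ x) :
    Real.sqrt (2 * π * (x + 1/6)) * (x / Real.exp 1) ^ x ≤ Real.Gamma (1 + x) ∧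
    Real.Gamma (1 + x)
      ≤ Real.sqrt (2 * π * (x + Real.exp 1 ^ 2 / (2*π) - 1)) * (x / Real.exp 1) ^ x := by
  have hx0 : 0 < x := by linarith
  have hΓ : 0 < Gamma (1 + x) := Gamma_pos_of_pos (by linarith)
  have ha := exp_one_sq_div_two_pi_sub_one_mem_Icc.1
  have hb : 0 < x + (exp 1 ^ 2 / (2 * π) - 1) := by linarith
  have hlow := half_log_add_sixth_le_logGammaExcess hx
  have hupp := logGammaExcess_le_half_log hx
  rw [logGammaExcess] at hlow hupp
  rw [add_sub_assoc]
  constructor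
  · rw [← log_le_log_iff (by positivity) hΓ, log_sqrt_mul_rpow hx0 (by positivity)]
    linarith
  · rw [← log_le_log_iff hΓ (by positivity), log_sqrt_mul_rpow hx0 hb]
    linarith
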